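/- arXiv:1809.04802 — 6 statements merged into one kernel-verified Lean document; each statement's English description precedes it below -/
import Mathlib

section
/- Let G=(V,E) be a finite undirected graph with m = |E| edges, and let w₁, w₂ be edge-weight vectors such that |w₁ₑ − w₂ₑ| ≤ β for every e ∈ E (i.e., ‖w₁ − w₂‖_∞ ≤ β). Then for every nonempty subset S ⊆ V, |f_{w₁}(S) − f_{w₂}(S)| ≤ √(m/2) · β. -/
open Finset
open scoped Classical

/-- The set of edges of `G` whose both endpoints lie in `S`, i.e. `E(S)`. -/
noncomputable def edgesIn {V : Type*} [Fintype V] (G : SimpleGraph V) (S : Finset V) :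
    Finset (Sym2 V) :=
  G.edgeFinset.filter (fun e => ∀ v ∈ e, v ∈ S)

/-- The density `f_w(S) = w(S) / |S|` of the subgraph induced by `S`. -/
noncomputable def density {V : Type*} [Fintype V] (G : SimpleGraph V) (w : Sym2 V → ℝ)
    (S : Finset V) : ℝ :=
  (∑ e ∈ edgesIn G S, w e) / (S.card : ℝ)

lemma edgesIn_card_le {V : Type*} [Fintype V] (G : SimpleGraph V) (S : Finset V) :
    2 * (edgesIn G S).card ≤ S.card ^ 2 := by
  have h : edgesIn G S ⊆ S.offDiag.image (fun p => s(p.1, p.2)) := by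
    intro e he
    induction e using Sym2.ind with
    | _ a b =>
      simp only [edgesIn, Finset.mem_filter, SimpleGraph.mem_edgeFinset,
        SimpleGraph.mem_edgeSet] at he
      refine Finset.mem_image.2 ⟨(a, b), ?_, rfl⟩
      exact Finset.mem_offDiag.2 ⟨he.2 a (by simp), he.2 b (by simp), he.1.ne⟩
  have h1 := Finset.card_le_card h
  have h2 : (S.offDiag.image (fun p => s(p.1, p.2))).card = S.card.choose 2 :=
    Sym2.card_image_offDiag S
  rw [h2, Nat.choose_two_right] at h1
  have h3 : S.card * (S.card - 1) ≤ S.card ^ 2 := by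
    rw [sq]; exact Nat.mul_le_mul_left _ (Nat.sub_le _ _)
  omega

/-- If `|w₁ₑ − w₂ₑ| ≤ β` for every edge `e`, then for every nonempty `S ⊆ V`,
`|f_{w₁}(S) − f_{w₂}(S)| ≤ √(m/2) · β`, where `m = |E|`. -/
theorem density_diff_le_sqrt {V : Type*} [Fintype V] (G : SimpleGraph V)
    (w₁ w₂ : Sym2 V → ℝ) (β : ℝ)
    (hw : ∀ e ∈ G.edgeFinset, |w₁ e - w₂ e| ≤ β)
    (S : Finset V) (hS : S.Nonempty) :
    |density G w₁ S - density G w₂ S| ≤ Real.sqrt ((G.edgeFinset.card : ℝ) / 2) * β := by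
  have hs : (0 : ℝ) < S.card := by exact_mod_cast hS.card_pos
  have hsub : edgesIn G S ⊆ G.edgeFinset := Finset.filter_subset _ _
  have hk := edgesIn_card_le G S
  have hkm := Finset.card_le_card hsub
  by_cases hE : G.edgeFinset = ∅
  · have h0 : edgesIn G S = ∅ := Finset.subset_empty.1 (hE ▸ hsub)
    simp only [density, h0, hE]
    simp
  obtain ⟨e₀, he₀⟩ := Finset.nonempty_iff_ne_empty.2 hE
  have hβ : 0 ≤ β := (abs_nonneg _).trans (hw e₀ he₀)
  have hsum : |∑ e ∈ edgesIn G S, (w₁ e - w₂ e)| ≤ (edgesIn G S).card * β := by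
    refine (Finset.abs_sum_le_sum_abs _ _).trans ?_
    refine (Finset.sum_le_card_nsmul _ _ β fun e he => hw e (hsub he)).trans ?_
    rw [nsmul_eq_mul]
  have hd : density G w₁ S - density G w₂ S
      = (∑ e ∈ edgesIn G S, (w₁ e - w₂ e)) / (S.card : ℝ) := by
    rw [density, density, Finset.sum_sub_distrib, sub_div]
  rw [hd, abs_div, abs_of_pos hs]
  have hkey : ((edgesIn G S).card : ℝ) / S.card ≤ Real.sqrt ((G.edgeFinset.card : ℝ) / 2) := by
    apply Real.le_sqrt_of_sq_le
    rw [div_pow, div_le_div_iff₀ (by positivity) (by norm_num)]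
    have hk' : 2 * ((edgesIn G S).card : ℝ) ≤ (S.card : ℝ) ^ 2 := by exact_mod_cast hk
    have hkm' : ((edgesIn G S).card : ℝ) ≤ G.edgeFinset.card := by exact_mod_cast hkm
    have := mul_le_mul hkm' hk' (by positivity) (by positivity)
    linarith
  calc _ ≤ ((edgesIn G S).card * β) / S.card := by gcongr
    _ = ((edgesIn G S).card : ℝ) / S.card * β := by ring
    _ ≤ _ := by gcongr
end

section
/- Let G=(V,E) be a finite undirected graph and let lₑ, rₑ (for e ∈ E) satisfy 0 < lₑ ≤ rₑ for every e ∈ E. Let w⁻ = (lₑ)ₑ∈E and let S⁻ ⊆ V be a nonempty subset maximizing the density f_{w⁻}. Then for every edge-weight vector w with lₑ ≤ wₑ ≤ rₑ for all e ∈ E, and every nonempty subset T ⊆ V, it holds that f_w(S⁻) ≥ (min_{e∈E} lₑ/rₑ) · f_w(T). In particular, the robust ratio of S⁻ under the edge-weight space W = ∏_{e∈E}[lₑ, rₑ] is at least 1/(max_{e∈E} rₑ/lₑ). -/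
open Finset
open scoped Classical

/-- Performance guarantee of the basic algorithm: if `0 < lₑ ≤ rₑ` for all edges,
`S⁻` is a densest subgraph with respect to `w⁻ = (lₑ)`, and `ρ` is a lower bound on
`lₑ/rₑ` over all edges (in particular `ρ = min_{e∈E} lₑ/rₑ`), then for every
edge-weight vector `w ∈ ∏ₑ[lₑ, rₑ]` and every nonempty `T ⊆ V`,
`f_w(S⁻) ≥ ρ · f_w(T)`; i.e. the robust ratio of `S⁻` is at least `1/(max_{e∈E} rₑ/lₑ)`. -/
theorem basic_algorithm_robust_ratio {V : Type*} [Fintype V] (G : SimpleGraph V)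
    (l r : Sym2 V → ℝ)
    (hlr : ∀ e ∈ G.edgeFinset, 0 < l e ∧ l e ≤ r e)
    (Sm : Finset V) (hSm : Sm.Nonempty)
    (hSmOpt : ∀ T : Finset V, T.Nonempty → density G l T ≤ density G l Sm)
    (ρ : ℝ) (hρ : ∀ e ∈ G.edgeFinset, ρ ≤ l e / r e)
    (w : Sym2 V → ℝ) (hw : ∀ e ∈ G.edgeFinset, l e ≤ w e ∧ w e ≤ r e)
    (T : Finset V) (hT : T.Nonempty) :
    ρ * density G w T ≤ density G w Sm := by
  have key : ∀ e ∈ G.edgeFinset, ρ * w e ≤ l e := by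
    intro e he
    obtain ⟨h0, h1⟩ := hlr e he
    obtain ⟨h2, h3⟩ := hw e he
    have h4 := (le_div_iff₀ (lt_of_lt_of_le h0 h1)).1 (hρ e he)
    rcases le_total ρ 0 with h | h
    · nlinarith
    · nlinarith
  have hsub : ∀ S : Finset V, ∀ e ∈ edgesIn G S, e ∈ G.edgeFinset := by
    intro S e he
    exact (Finset.mem_filter.1 he).1
  have a : ρ * density G w T ≤ density G l T := by
    unfold density
    rw [← mul_div_assoc, Finset.mul_sum]
    exact div_le_div_of_nonneg_right
      (Finset.sum_le_sum fun e he => key e (hsub T e he)) (Nat.cast_nonneg _)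
  have b : density G l Sm ≤ density G w Sm := by
    unfold density
    exact div_le_div_of_nonneg_right
      (Finset.sum_le_sum fun e he => (hw e (hsub Sm e he)).1) (Nat.cast_nonneg _)
  exact a.trans ((hSmOpt T hT).trans b)
end

section
/- Let G=(V,E) be a finite undirected graph in which every vertex has degree at least one, and let W = ∏_{e∈E}[lₑ, rₑ] be an edge-weight space with lₑ = 0 and rₑ > 0 for every e ∈ E. Then for every proper subset S ⊊ V there exists an edge-weight vector w ∈ W (i.e., 0 ≤ wₑ ≤ rₑ for all e) such that f_w(S) = 0 while the maximum density max over nonempty T ⊆ V of f_w(T) is strictly positive; consequently, the robust ratio of S under W equals 0. -/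
open Finset
open scoped Classical

/-- If every vertex of `G` has degree at least one and the edge-weight space is
`W = ∏ₑ[0, rₑ]` with `rₑ > 0`, then for every proper subset `S ⊊ V` there is a
weight vector `w ∈ W` for which `f_w(S) = 0` while the maximum density is strictly
positive; consequently the robust ratio of `S` under `W` equals `0`. -/
theorem robust_ratio_zero_of_proper {V : Type*} [Fintype V] (G : SimpleGraph V)
    (hdeg : ∀ v : V, 0 < G.degree v)
    (r : Sym2 V → ℝ) (hr : ∀ e ∈ G.edgeFinset, 0 < r e)
    (S : Finset V) (hS : S ⊂ Finset.univ) :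
    ∃ w : Sym2 V → ℝ,
      (∀ e ∈ G.edgeFinset, 0 ≤ w e ∧ w e ≤ r e) ∧
      density G w S = 0 ∧
      ∃ T : Finset V, T.Nonempty ∧
        (∀ U : Finset V, U.Nonempty → density G w U ≤ density G w T) ∧
        0 < density G w T ∧
        density G w S / density G w T = 0 := by
  obtain ⟨v, -, hv⟩ := Finset.exists_of_ssubset hS
  obtain ⟨u, hu⟩ := (G.degree_pos_iff_exists_adj v).1 (hdeg v)
  have he : s(v, u) ∈ G.edgeFinset := by simpa using hu
  have hnn : ∀ e ∈ G.edgeFinset, 0 ≤ (if (∀ x ∈ e, x ∈ S) then 0 else r e) ∧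
      (if (∀ x ∈ e, x ∈ S) then 0 else r e) ≤ r e := by
    intro e h
    have := hr e h
    split_ifs
    · exact ⟨le_rfl, this.le⟩
    · exact ⟨this.le, le_rfl⟩
  refine ⟨fun e => if (∀ x ∈ e, x ∈ S) then 0 else r e, hnn, ?_⟩
  have h0 : density G (fun e => if (∀ x ∈ e, x ∈ S) then 0 else r e) S = 0 := by
    unfold density
    rw [Finset.sum_eq_zero, zero_div]
    intro e h
    exact if_pos (Finset.mem_filter.1 h).2
  refine ⟨h0, ?_⟩
  obtain ⟨T, hT, hmax⟩ := Finset.exists_max_image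
    ((Finset.univ : Finset (Finset V)).filter (fun U => U.Nonempty))
    (density G (fun e => if (∀ x ∈ e, x ∈ S) then 0 else r e))
    ⟨{v}, by simp⟩
  have hmax' : ∀ U : Finset V, U.Nonempty → _ := fun U hU => hmax U (by simpa using hU)
  refine ⟨T, by simpa using hT, hmax', ?_, by rw [h0, zero_div]⟩
  refine lt_of_lt_of_le ?_ (hmax' Finset.univ ⟨v, Finset.mem_univ v⟩)
  unfold density
  apply div_pos
  · apply Finset.sum_pos'
    · intro e h
      exact (hnn e (Finset.mem_filter.1 h).1).1
    · refine ⟨s(v, u), Finset.mem_filter.2 ⟨he, fun x _ => Finset.mem_univ x⟩, ?_⟩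
      have hn : ¬ ∀ x ∈ s(v, u), x ∈ S := fun h => hv (h v (by simp))
      simp only [if_neg hn]
      exact hr _ he
  · exact_mod_cast Finset.card_pos.2 ⟨v, Finset.mem_univ v⟩
end

section
/- Let G=(V,E) be a finite undirected graph with n = |V| ≥ 1 and at least one edge, and let W = ∏_{e∈E}[lₑ, rₑ] be an edge-weight space with lₑ = 0 and rₑ > 0 for every e ∈ E. Then there exists an edge-weight vector w ∈ W such that f_w(V) ≤ (2/n) · max over nonempty T ⊆ V of f_w(T); consequently, the robust ratio of the full vertex set V under W is at most 2/n. -/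
open Finset
open scoped Classical

/-- Strong form: the weight vector can be chosen with strictly positive maximum density, so that
the ratio `f_w(V) / max_T f_w(T)` is a genuine quotient. -/
theorem exists_weight_pos {V : Type*} [Fintype V] (G : SimpleGraph V)
    (hE : G.edgeFinset.Nonempty)
    (r : Sym2 V → ℝ) (hr : ∀ e ∈ G.edgeFinset, 0 < r e) :
    ∃ w : Sym2 V → ℝ,
      (∀ e ∈ G.edgeFinset, 0 ≤ w e ∧ w e ≤ r e) ∧
      ∃ T : Finset V, T.Nonempty ∧
        (∀ U : Finset V, U.Nonempty → density G w U ≤ density G w T) ∧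
        0 < density G w T ∧
        density G w (Finset.univ : Finset V) ≤
          (2 / (Fintype.card V : ℝ)) * density G w T := by
  obtain ⟨e, he⟩ := hE
  induction e using Sym2.ind with
  | _ a b =>
  have hab : a ≠ b := by
    have h : G.Adj a b := by simpa using he
    exact h.ne
  have hpos := hr _ he
  have hd : ∀ S : Finset V, density G (fun e => if e = s(a, b) then r e else 0) S
      = (if a ∈ S ∧ b ∈ S then r s(a, b) else 0) / (S.card : ℝ) := by
    intro S
    have hm : s(a, b) ∈ edgesIn G S ↔ (a ∈ S ∧ b ∈ S) := by
      unfold edgesIn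
      rw [Finset.mem_filter]
      simp only [he, true_and, Sym2.mem_iff, forall_eq_or_imp, forall_eq]
    unfold density
    rw [Finset.sum_ite_eq']
    simp only [hm]
  have hT : density G (fun e => if e = s(a, b) then r e else 0) {a, b} = r s(a, b) / 2 := by
    rw [hd, Finset.card_pair hab]
    simp
  refine ⟨fun e => if e = s(a, b) then r e else 0, ?_, {a, b}, ⟨a, by simp⟩, ?_, ?_, ?_⟩
  · intro e' he'
    have := hr e' he'
    dsimp only
    split_ifs
    · exact ⟨this.le, le_refl _⟩
    · exact ⟨le_refl _, this.le⟩
  · intro U _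
    rw [hT, hd]
    split_ifs with h
    · have hsub : ({a, b} : Finset V) ⊆ U := by
        intro x hx
        simp only [Finset.mem_insert, Finset.mem_singleton] at hx
        rcases hx with rfl | rfl
        · exact h.1
        · exact h.2
      have hc := Finset.card_le_card hsub
      rw [Finset.card_pair hab] at hc
      have hc' : (2 : ℝ) ≤ (U.card : ℝ) := by exact_mod_cast hc
      exact div_le_div_of_nonneg_left hpos.le (by norm_num) hc'
    · rw [zero_div]
      positivity
  · rw [hT]
    positivity
  · rw [hT, hd]
    simp only [Finset.mem_univ, and_self, if_true, Finset.card_univ]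
    apply le_of_eq
    ring

/-- If `G` has `n ≥ 1` vertices and at least one edge, and the edge-weight space is
`W = ∏ₑ[0, rₑ]` with `rₑ > 0`, then there is a weight vector `w ∈ W` such that
`f_w(V) ≤ (2/n) · max_{T ≠ ∅} f_w(T)`; consequently the robust ratio of the full
vertex set `V` under `W` is at most `2/n`. -/
theorem robust_ratio_of_univ_le {V : Type*} [Fintype V] (G : SimpleGraph V)
    (hn : 1 ≤ Fintype.card V) (hE : G.edgeFinset.Nonempty)
    (r : Sym2 V → ℝ) (hr : ∀ e ∈ G.edgeFinset, 0 < r e) :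
    ∃ w : Sym2 V → ℝ,
      (∀ e ∈ G.edgeFinset, 0 ≤ w e ∧ w e ≤ r e) ∧
      ∃ T : Finset V, T.Nonempty ∧
        (∀ U : Finset V, U.Nonempty → density G w U ≤ density G w T) ∧
        density G w (Finset.univ : Finset V) ≤
          (2 / (Fintype.card V : ℝ)) * density G w T := by
  obtain ⟨w, hw, T, hne, hmax, _, hle⟩ := exists_weight_pos G hE r hr
  exact ⟨w, hw, T, hne, hmax, hle⟩
end

section
/- Let G=(V,E) be a finite undirected graph with n = |V| vertices, in which every vertex has degree at least one and such that |E(S)| ≤ α·|S| holds for every subset S ⊆ V, for some constant α > 0. Let W = ∏_{e∈E}[l, r] be the edge-weight space with the same interval [l, r] for every edge, where 0 < l ≤ r and n ≥ r/l. Then the robust ratio of the full vertex set V under W is strictly less than 2(α + 1)·(l/r). -/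
open Finset
open scoped Classical

/-- Tightness of the basic algorithm's guarantee for the full vertex set: suppose every
vertex of `G` has degree at least one and `|E(S)| ≤ α · |S|` for every `S ⊆ V`, with
`α > 0`. Let the edge-weight space be `W = ∏ₑ[l, r]` with `0 < l ≤ r` and `n ≥ r/l`,
where `n = |V|`. Then the robust ratio of `V` under `W` is strictly less than
`2(α + 1) · (l/r)`: there is a weight vector `w ∈ W` and a densest subgraph `T`
with respect to `w` such that `f_w(V) / f_w(T) < 2(α + 1) · (l/r)`. -/
theorem robust_ratio_lt_of_univ {V : Type*} [Fintype V] (G : SimpleGraph V)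
    (hdeg : ∀ v : V, 0 < G.degree v)
    (α : ℝ) (hα : 0 < α)
    (hsparse : ∀ S : Finset V, ((edgesIn G S).card : ℝ) ≤ α * S.card)
    (l r : ℝ) (hl : 0 < l) (hlr : l ≤ r)
    (hn : r / l ≤ (Fintype.card V : ℝ)) :
    ∃ w : Sym2 V → ℝ,
      (∀ e ∈ G.edgeFinset, l ≤ w e ∧ w e ≤ r) ∧
      ∃ T : Finset V, T.Nonempty ∧
        (∀ U : Finset V, U.Nonempty → density G w U ≤ density G w T) ∧
        density G w (Finset.univ : Finset V) / density G w T < 2 * (α + 1) * (l / r) := by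
  have hr : 0 < r := lt_of_lt_of_le hl hlr
  have hnpos : 0 < (Fintype.card V : ℝ) := lt_of_lt_of_le (div_pos hr hl) hn
  have hne : Nonempty V := Fintype.card_pos_iff.mp (by exact_mod_cast hnpos)
  obtain ⟨u⟩ := hne
  obtain ⟨v, huv⟩ := (G.degree_pos_iff_exists_adj u).mp (hdeg u)
  let w : Sym2 V → ℝ := fun e => l + if e = s(u, v) then r - l else 0
  have hwl : ∀ e, l ≤ w e := by
    intro e
    simp only [w]
    split_ifs <;> linarith
  have hwr : ∀ e, w e ≤ r := by
    intro e
    simp only [w]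
    split_ifs <;> linarith
  refine ⟨w, fun e _ => ⟨hwl e, hwr e⟩, ?_⟩
  obtain ⟨T, hT, hmax⟩ := Finset.exists_max_image
    ((Finset.univ : Finset (Finset V)).filter (fun U => U.Nonempty)) (density G w)
    ⟨{u}, by simp⟩
  have hmax' : ∀ U : Finset V, U.Nonempty → density G w U ≤ density G w T :=
    fun U hU => hmax U (by simpa using hU)
  refine ⟨T, by simpa using hT, hmax', ?_⟩
  have hpair : r / 2 ≤ density G w {u, v} := by
    have hmem : s(u, v) ∈ edgesIn G {u, v} := by
      simp [edgesIn, huv]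
    have h1 : w s(u, v) ≤ ∑ e ∈ edgesIn G {u, v}, w e :=
      Finset.single_le_sum (f := w) (fun e _ => le_trans hl.le (hwl e)) hmem
    have h2 : w s(u, v) = r := by simp [w]
    rw [h2] at h1
    have hc : (({u, v} : Finset V).card : ℝ) = 2 := by
      rw [Finset.card_pair huv.ne]; norm_num
    unfold density
    rw [hc]
    linarith
  have hTr : r / 2 ≤ density G w T := hpair.trans (hmax' _ (by simp))
  have hV : density G w Finset.univ < l * (α + 1) := by
    unfold density
    rw [Finset.card_univ, div_lt_iff₀ hnpos]
    have hs := hsparse Finset.univ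
    rw [Finset.card_univ] at hs
    have hsum : ∑ e ∈ edgesIn G Finset.univ, w e
        ≤ (edgesIn G Finset.univ).card * l + (r - l) := by
      simp only [w, Finset.sum_add_distrib, Finset.sum_const, nsmul_eq_mul,
        Finset.sum_ite_eq']
      split_ifs <;> linarith
    rw [div_le_iff₀ hl] at hn
    nlinarith [mul_le_mul_of_nonneg_right hs hl.le]
  have hTpos : 0 < density G w T := by linarith
  rw [div_lt_iff₀ hTpos]
  calc density G w Finset.univ < l * (α + 1) := hV
    _ = 2 * (α + 1) * (l / r) * (r / 2) := by field_simp
    _ ≤ _ := mul_le_mul_of_nonneg_left hTr (by positivity)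
end

section
/- Let G=(V,E) be a finite undirected graph with m = |E| ≥ 1 edges, let ε > 0, and let w⁻, w⁺ be edge-weight vectors with 0 ≤ w⁻ₑ ≤ w⁺ₑ for every e ∈ E. Suppose that ‖w⁺ − w⁻‖_∞ ≤ √(2/m) · ε · D, where D is a real number with 0 < D ≤ max over nonempty S ⊆ V of f_{w⁺}(S). Let S⁺ be a densest subgraph with respect to w⁺. Then f_{w⁻}(S⁺) ≥ (1 − ε) · f_{w⁺}(S⁺). -/
open Finset
open scoped Classical

theorem edgesIn_card_bound {V : Type*} [Fintype V] (G : SimpleGraph V) (S : Finset V) :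
    2 * (edgesIn G S).card ≤ S.card * S.card := by
  have h1 : edgesIn G S ⊆ S.offDiag.image (fun p : V × V => s(p.1, p.2)) := by
    intro e
    induction e using Sym2.ind with
    | _ x y =>
      intro h
      simp only [edgesIn, mem_filter, SimpleGraph.mem_edgeFinset, SimpleGraph.mem_edgeSet] at h
      rw [mem_image]
      exact ⟨(x, y), by
        rw [mem_offDiag]
        exact ⟨h.2 x (Sym2.mem_mk_left x y), h.2 y (Sym2.mem_mk_right x y), h.1.ne⟩, rfl⟩
  have h2 := card_le_card h1
  have h3 : (S.offDiag.image (fun p : V × V => s(p.1, p.2))).card = S.card.choose 2 :=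
    Sym2.card_image_offDiag S
  rw [h3, Nat.choose_two_right] at h2
  have h4 : 2 * (S.card * (S.card - 1) / 2) ≤ S.card * (S.card - 1) := Nat.mul_div_le _ _
  have h5 : S.card * (S.card - 1) ≤ S.card * S.card := Nat.mul_le_mul_left _ (Nat.sub_le _ _)
  omega

/-- Suppose `m = |E| ≥ 1`, `ε > 0`, `0 ≤ w⁻ ≤ w⁺` edgewise, and
`‖w⁺ − w⁻‖_∞ ≤ √(2/m) · ε · D`, where `0 < D` and `D` is at most the optimal density
with respect to `w⁺` (witnessed by some nonempty subset). If `S⁺` is a densest subgraph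
with respect to `w⁺`, then `f_{w⁻}(S⁺) ≥ (1 − ε) · f_{w⁺}(S⁺)`. -/
theorem densest_upper_lower_close {V : Type*} [Fintype V] (G : SimpleGraph V)
    (hm : 1 ≤ G.edgeFinset.card) (ε : ℝ) (hε : 0 < ε)
    (wm wp : Sym2 V → ℝ)
    (hw : ∀ e ∈ G.edgeFinset, 0 ≤ wm e ∧ wm e ≤ wp e)
    (D : ℝ) (hD : 0 < D)
    (hDle : ∃ S : Finset V, S.Nonempty ∧ D ≤ density G wp S)
    (hdiff : ∀ e ∈ G.edgeFinset,
      |wp e - wm e| ≤ Real.sqrt (2 / (G.edgeFinset.card : ℝ)) * ε * D)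
    (Sp : Finset V) (hSp : Sp.Nonempty)
    (hSpOpt : ∀ T : Finset V, T.Nonempty → density G wp T ≤ density G wp Sp) :
    (1 - ε) * density G wp Sp ≤ density G wm Sp := by
  obtain ⟨S, hS, hDS⟩ := hDle
  have hDp : D ≤ density G wp Sp := hDS.trans (hSpOpt S hS)
  have hs : (0 : ℝ) < Sp.card := by exact_mod_cast hSp.card_pos
  have hm0 : (0 : ℝ) < G.edgeFinset.card := by exact_mod_cast hm
  have hsub : edgesIn G Sp ⊆ G.edgeFinset := filter_subset _ _
  have hkm : ((edgesIn G Sp).card : ℝ) ≤ G.edgeFinset.card := by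
    exact_mod_cast card_le_card hsub
  have hks : 2 * ((edgesIn G Sp).card : ℝ) ≤ Sp.card * Sp.card := by
    exact_mod_cast edgesIn_card_bound G Sp
  have hk0 : (0 : ℝ) ≤ (edgesIn G Sp).card := Nat.cast_nonneg _
  have key : ((edgesIn G Sp).card : ℝ) * Real.sqrt (2 / (G.edgeFinset.card : ℝ)) ≤ Sp.card := by
    refine (sq_le_sq₀ (by positivity) hs.le).1 ?_
    rw [mul_pow, Real.sq_sqrt (by positivity), ← mul_div_assoc, div_le_iff₀ hm0]
    nlinarith [mul_le_mul hkm hks (by positivity) hm0.le]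
  have hsum : ∑ e ∈ edgesIn G Sp, (wp e - wm e) ≤
      (edgesIn G Sp).card * (Real.sqrt (2 / (G.edgeFinset.card : ℝ)) * ε * D) := by
    rw [← nsmul_eq_mul]
    exact sum_le_card_nsmul _ _ _ fun e he => (le_abs_self _).trans (hdiff e (hsub he))
  have hd : density G wp Sp - density G wm Sp ≤ ε * D := by
    unfold density
    rw [← sub_div, ← sum_sub_distrib, div_le_iff₀ hs]
    nlinarith [mul_le_mul_of_nonneg_right key (mul_pos hε hD).le]
  nlinarith [mul_le_mul_of_nonneg_left hDp hε.le]
end
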